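/- arXiv:2401.00147 — 5 statements merged into one kernel-verified Lean document; each statement's English description precedes it below -/
import Mathlib

section
/- Let M and N be compact metric spaces, and let X ⊆ M and Y ⊆ N be countably infinite dense subsets such that every point of X is an isolated point of M and every point of Y is an isolated point of N. Set ∂M := M \ X and ∂N := N \ Y, each equipped with the subspace topology. If ψ : ∂M → ∂N is a homeomorphism, then there exists a bijection b : X → Y such that the map M → N which equals b on X and equals ψ on ∂M is a homeomorphism. -/
/-!
Send each point `x ∈ X` to a nearest point `p x` of the compact set `Xᶜ`, and likewise `q : Y → Yᶜ`.
Compactness of `M` gives `dist x (p x) → 0` along the cofinite filter of `X`, and density of `X`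
shows that `p` visits every nonempty open subset of `Xᶜ` infinitely often. Consequently any
bijection `b : X → Y` with `dist (ψ (p x)) (q (b x)) → 0` cofinitely glues with `ψ` to a continuous
bijection between compact Hausdorff spaces, that is, to a homeomorphism.

Such a `b` comes from the Schröder–Bernstein construction instead of a back-and-forth argument.
Since `q` visits every open set infinitely often, there is an injection `i : X → Y` with
`dist (ψ (p x)) (q (i x)) < 1 / (n + 1)`, where `n` is the index of `x` in an enumeration of `X`, and
there is a symmetric injection `j : Y → X`. The Schröder–Bernstein bijection satisfies `b x = i x`
or `x = j (b x)` at each `x`, so the distance is at most the larger of two quantities which both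
tend to `0`.
-/

open Filter Topology

/-- A sequence of infinite sets has an injective system of representatives. -/
lemma exists_injective_mem_of_infinite {β : Type*} (S : ℕ → Set β) (hS : ∀ n, (S n).Infinite) :
    ∃ i : ℕ → β, Function.Injective i ∧ ∀ n, i n ∈ S n := by
  classical
  -- Hall's condition holds for finite subsets `t n ⊆ S n` with `n + 1` elements.
  choose t htS htc using fun n => (hS n).exists_subset_card_eq (n + 1)
  obtain ⟨i, hi, hit⟩ := (Finset.all_card_le_biUnion_card_iff_exists_injective t).1 (by
    intro s
    rcases s.eq_empty_or_nonempty with rfl | hs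
    · simp
    calc s.card ≤ (Finset.range (s.max' hs + 1)).card := by
          refine Finset.card_le_card fun n hn => ?_
          simpa [Nat.lt_succ_iff] using s.le_max' n hn
      _ = (t (s.max' hs)).card := by simp [htc]
      _ ≤ _ := Finset.card_le_card (Finset.subset_biUnion_of_mem t (s.max'_mem hs)))
  exact ⟨i, hi, fun n => htS n (hit n)⟩

lemma tendsto_one_div_denumerable_cofinite {α : Type*} [Denumerable α] :
    Tendsto (fun a : α => 1 / ((Denumerable.eqv α a : ℝ) + 1)) cofinite (𝓝 0) := by
  have h := (Denumerable.eqv α).injective.tendsto_cofinite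
  rw [Nat.cofinite_eq_atTop] at h
  exact tendsto_one_div_add_atTop_nhds_zero_nat.comp h

/-- If `g` is within every positive distance of each point at infinitely many indices, then
any `f` is approximated by `g` along an injection, with an error that tends to `0`. -/
lemma exists_injective_dist_lt {α β K : Type*} [Denumerable α] [MetricSpace K]
    (f : α → K) (g : β → K)
    (hg : ∀ k : K, ∀ ε > 0, {b | dist k (g b) < ε}.Infinite) :
    ∃ i : α → β, Function.Injective i ∧
      ∀ a, dist (f a) (g (i a)) < 1 / ((Denumerable.eqv α a : ℝ) + 1) := by
  obtain ⟨i, hi, hid⟩ := exists_injective_mem_of_infinite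
    (fun n => {b | dist (f ((Denumerable.eqv α).symm n)) (g b) < 1 / ((n : ℝ) + 1)})
    (fun n => hg _ _ Nat.one_div_pos_of_nat)
  refine ⟨i ∘ Denumerable.eqv α, hi.comp (Denumerable.eqv α).injective, fun a => ?_⟩
  simpa using hid (Denumerable.eqv α a)

/-- Schröder–Bernstein applied to approximating injections in both directions: each value of the
resulting bijection comes from one injection or the inverse of the other, so errors still tend
to `0`. -/
lemma exists_bijective_tendsto_dist {α β K : Type*} [Denumerable α] [Denumerable β] [MetricSpace K]
    (f : α → K) (g : β → K)
    (hf : ∀ k : K, ∀ ε > 0, {a | dist k (f a) < ε}.Infinite)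
    (hg : ∀ k : K, ∀ ε > 0, {b | dist k (g b) < ε}.Infinite) :
    ∃ b : α → β, Function.Bijective b ∧
      Tendsto (fun a => dist (f a) (g (b a))) cofinite (𝓝 0) := by
  obtain ⟨i, hi, hid⟩ := exists_injective_dist_lt f g hg
  obtain ⟨j, hj, hjd⟩ := exists_injective_dist_lt g f hf
  obtain ⟨b, hb, hbd⟩ := Function.Embedding.schroeder_bernstein_of_rel hi hj
    (fun x y => dist (f x) (g y) ≤
      max (1 / ((Denumerable.eqv α x : ℝ) + 1)) (1 / ((Denumerable.eqv β y : ℝ) + 1)))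
    (fun a => (hid a).le.trans (le_max_left _ _))
    (fun y => by rw [dist_comm]; exact (hjd y).le.trans (le_max_right _ _))
  refine ⟨b, hb, squeeze_zero (fun _ => dist_nonneg) hbd ?_⟩
  simpa using tendsto_one_div_denumerable_cofinite.max
    (tendsto_one_div_denumerable_cofinite.comp hb.injective.tendsto_cofinite)

/-- A nearest-point map `p` onto the complement of a dense set of isolated points: it moves all but
finitely many points by less than any given amount, and it comes arbitrarily close to every
point of the complement infinitely often. -/
lemma exists_nearest_map {M : Type*} [MetricSpace M] [CompactSpace M] (X : Set M)
    (hXi : X.Infinite) (hXd : Dense X) (hXiso : ∀ x ∈ X, IsOpen ({x} : Set M)) :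
    ∃ p : X → (Xᶜ : Set M),
      Tendsto (fun x : X => dist (p x : M) (x : M)) cofinite (𝓝 0) ∧
      ∀ z : (Xᶜ : Set M), ∀ U ∈ 𝓝 z, {x | p x ∈ U}.Infinite := by
  have hXo : IsOpen X := by
    rw [← Set.biUnion_of_singleton X]
    exact isOpen_biUnion hXiso
  have hfin : ∀ s ⊆ X, IsClosed s → s.Finite := fun s hs hc =>
    hc.isCompact.finite ⟨discreteTopology_subtype_iff'.2 fun x hx =>
      ⟨{x}, hXiso x (hs hx), by simpa using hx⟩⟩
  have hne : (Xᶜ : Set M).Nonempty := by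
    rw [Set.nonempty_compl]
    rintro rfl
    exact hXi (hfin _ subset_rfl isClosed_univ)
  choose p hpX hpd using fun x : M =>
    hXo.isClosed_compl.isCompact.exists_infDist_eq_dist hne x
  refine ⟨fun x => ⟨p x, hpX x⟩, ?_, ?_⟩
  · rw [Metric.tendsto_nhds]
    intro ε hε
    -- The points at distance at least `ε` from `Xᶜ` form a compact subset of the discrete set `X`.
    have hc : {m : M | ε ≤ Metric.infDist m Xᶜ}.Finite := by
      refine hfin _ (fun m hm => ?_)
        (isClosed_le continuous_const (Metric.continuous_infDist_pt _))
      by_contra h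
      have h0 := Metric.infDist_zero_of_mem (s := Xᶜ) h
      simp only [Set.mem_ofPred_eq, h0] at hm
      linarith
    have := hc.preimage (Subtype.val_injective (p := (· ∈ X))).injOn
    refine this.subset fun x hx => ?_
    simpa [dist_comm, hpd] using hx
  · intro z U hU
    obtain ⟨ε, hε, hεU⟩ := Metric.mem_nhds_iff.1 hU
    -- Points of `X` close to `z` have nearest points close to `z`.
    have hsub : ∀ x : X, dist (x : M) z < ε / 2 → (⟨p x, hpX x⟩ : (Xᶜ : Set M)) ∈ U := by
      intro x hx
      apply hεU
      have h1 : dist (x : M) (p x) ≤ dist (x : M) z := by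
        rw [← hpd]; exact Metric.infDist_le_dist_of_mem z.2
      have h2 := dist_triangle_left (p x) (z : M) x
      rw [Metric.mem_ball, Subtype.dist_eq]
      change dist (p x) (z : M) < ε
      linarith
    intro hF
    have hF' := hF.image (Subtype.val : X → M)
    -- Otherwise removing finitely many points of `X` from a ball around `z` leaves a
    -- neighbourhood of `z` disjoint from `X`.
    obtain ⟨x, ⟨hxF, hxb⟩, hxX⟩ := hXd.inter_open_nonempty _
      (hF'.isClosed.isOpen_compl.inter (Metric.isOpen_ball (x := (z : M)) (ε := ε / 2)))
      ⟨z, by rintro ⟨x, -, hx⟩; exact z.2 (hx ▸ x.2), Metric.mem_ball_self (by linarith)⟩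
    exact hxF ⟨⟨x, hxX⟩, hsub ⟨x, hxX⟩ hxb, rfl⟩

/-- Let `M` and `N` be compact metric spaces, `X ⊆ M` and `Y ⊆ N`
countably infinite dense subsets all of whose points are isolated in the ambient space.
If `ψ : M \ X → N \ Y` is a homeomorphism (subspace topologies), then there is a
bijection `b : X → Y` such that the map `M → N` equal to `b` on `X` and to `ψ` on
`M \ X` is a homeomorphism. -/
theorem stmt0 {M N : Type*} [MetricSpace M] [CompactSpace M] [MetricSpace N] [CompactSpace N]
    (X : Set M) (Y : Set N)
    (hXc : X.Countable) (hXi : X.Infinite) (hXd : Dense X)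
    (hXiso : ∀ x ∈ X, IsOpen ({x} : Set M))
    (hYc : Y.Countable) (hYi : Y.Infinite) (hYd : Dense Y)
    (hYiso : ∀ y ∈ Y, IsOpen ({y} : Set N))
    (ψ : (Xᶜ : Set M) ≃ₜ (Yᶜ : Set N)) :
    ∃ b : X → Y, Function.Bijective b ∧
      ∃ Φ : M ≃ₜ N, (∀ x : X, Φ (x : M) = (b x : N)) ∧
        (∀ z : (Xᶜ : Set M), Φ (z : M) = (ψ z : N)) := by
  classical
  have := hXc.to_subtype
  have := hXi.to_subtype
  have := hYc.to_subtype
  have := hYi.to_subtype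
  obtain ⟨_⟩ := nonempty_denumerable X
  obtain ⟨_⟩ := nonempty_denumerable Y
  obtain ⟨p, hp0, hpi⟩ := exists_nearest_map X hXi hXd hXiso
  obtain ⟨q, hq0, hqi⟩ := exists_nearest_map Y hYi hYd hYiso
  have hball : ∀ k : (Yᶜ : Set N), ∀ ε > 0, {w | dist k w < ε} ∈ 𝓝 k := fun k ε hε => by
    simpa [Metric.ball, dist_comm] using Metric.ball_mem_nhds k hε
  obtain ⟨b, hb, hbd⟩ := exists_bijective_tendsto_dist (fun x => ψ (p x)) q
    (fun k ε hε => hpi (ψ.symm k) (ψ ⁻¹' {w | dist k w < ε})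
      (ψ.continuous.continuousAt.preimage_mem_nhds (by simpa using hball k ε hε)))
    (fun k ε hε => hqi k _ (hball k ε hε))
  let e : M ≃ N := (Equiv.Set.sumCompl X).symm.trans
    (((Equiv.ofBijective b hb).sumCongr ψ.toEquiv).trans (Equiv.Set.sumCompl Y))
  have heX : ∀ x : X, e x = b x := fun x => by
    simp only [e, Equiv.trans_apply, Equiv.Set.sumCompl_symm_apply]; rfl
  have heZ : ∀ z : (Xᶜ : Set M), e z = ψ z := fun z => by
    simp only [e, Equiv.trans_apply, Equiv.Set.sumCompl_symm_apply_compl]; rfl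
  have hcont : Continuous e := by
    rw [continuous_iff_continuousAt]
    intro m
    by_cases hm : m ∈ X
    · rw [ContinuousAt, (isOpen_singleton_iff_nhds_eq_pure m).1 (hXiso m hm)]
      exact tendsto_pure_left.2 fun s hs => mem_of_mem_nhds hs
    let z : (Xᶜ : Set M) := ⟨m, hm⟩
    rw [← continuousWithinAt_univ, ← Set.union_compl_self X, continuousWithinAt_union]
    constructor
    · -- `L` is the filter of points of `X` tending to `m`.
      set L : Filter X := comap (Subtype.val : X → M) (𝓝 m) with hL
      have hLc : L ≤ cofinite := by
        rw [le_cofinite_iff_compl_singleton_mem]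
        intro x
        exact ⟨{(x : M)}ᶜ, isOpen_compl_singleton.mem_nhds (fun h => hm (h ▸ x.2)),
          fun y hy h => hy (congrArg Subtype.val h)⟩
      have h1 : Tendsto (fun x : X => (x : M)) L (𝓝 m) := tendsto_comap
      have h2 : Tendsto p L (𝓝 z) := by
        rw [tendsto_subtype_rng]
        exact h1.congr_dist (by simpa only [dist_comm] using hp0.mono_left hLc)
      have h3 : Tendsto (fun x => ψ (p x)) L (𝓝 (ψ z)) := (ψ.continuous.tendsto z).comp h2
      have h4 : Tendsto (fun x => q (b x)) L (𝓝 (ψ z)) := h3.congr_dist (hbd.mono_left hLc)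
      have h5 : Tendsto (fun x => (b x : N)) L (𝓝 (ψ z : N)) :=
        (tendsto_subtype_rng.1 h4).congr_dist
          ((hq0.comp hb.injective.tendsto_cofinite).mono_left hLc)
      rw [ContinuousWithinAt, nhdsWithin, ← map_comap_setCoe_val, tendsto_map'_iff,
        show e m = ψ z from heZ z]
      exact h5.congr fun x => (heX x).symm
    · rw [ContinuousWithinAt, nhdsWithin_eq_map_subtype_coe hm, tendsto_map'_iff,
        show e m = ψ z from heZ z]
      exact ((continuous_subtype_val.comp ψ.continuous).tendsto z).congr fun z => (heZ z).symm
  exact ⟨b, hb, hcont.homeoOfEquivCompactToT2, heX, heZ⟩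
end

section
/- Let M and N be compact metric spaces, and let X ⊆ M and Y ⊆ N be countably infinite dense subsets such that every point of X is an isolated point of M and every point of Y is an isolated point of N. Set ∂M := M \ X and ∂N := N \ Y, each equipped with the subspace topology. Let ψ : ∂M → ∂N be a homeomorphism and fix points x₀ ∈ X and y₀ ∈ Y. Then there exists a bijection b : X → Y with b(x₀) = y₀ such that the map M → N which equals b on X and equals ψ on ∂M is a homeomorphism. -/
/-!
Send each `x ∈ X` to a nearest point `p x` of the remainder `∂M`, and each `y ∈ Y` to a nearest
point `q y` of `∂N`. Compactness makes `dist x (p x)` tend to `0` along the cofinite filter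
(`X` is discrete, so a compact subset of it is finite), and density of `X` makes every point of
`∂M` a cluster point of `p` (`exists_nearest`). Hence `ψ ∘ p` and `q` are two families in the
metric space `∂N` for which every point is a cluster point.

For two such countable families `f` and `g` there is a bijection `b` of the index sets with
`dist (f x) (g (b x)) → 0` (`exists_equiv_tendsto`): injections in both directions that are
asymptotically compatible with `f` and `g` exist by choosing indices greedily, and the
Schröder–Bernstein bijection agrees at each point with one of the two injections. A transposition,
which changes the bijection at finitely many points only, arranges `b x₀ = y₀`.

With such a `b`, `dist (ψ (p x)) (b x) → 0` along the cofinite filter, which makes `b ∪ ψ`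
continuous at each point of `∂M`; a continuous bijection from a compact space to a Hausdorff space
is a homeomorphism.
-/

open Filter Topology

/-- A compact set consisting of isolated points is finite. -/
lemma finite_of_isCompact_of_isolated {M : Type*} [TopologicalSpace M] {S : Set M}
    (hS : IsCompact S) (hiso : ∀ x ∈ S, IsOpen ({x} : Set M)) : S.Finite := by
  obtain ⟨t, ht, htf, hcov⟩ := hS.elim_finite_subcover_image (b := S) (c := fun x => {x}) hiso
    (fun x hx => by simpa using hx)
  exact htf.subset (fun x hx => by simpa using hcov hx)

/-- The nearest-point map `p` from the isolated points `X` to the remainder `Xᶜ`. -/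
lemma exists_nearest {M : Type*} [MetricSpace M] [CompactSpace M] (X : Set M)
    (hXi : X.Infinite) (hXd : Dense X) (hXiso : ∀ x ∈ X, IsOpen ({x} : Set M)) :
    ∃ p : X → (Xᶜ : Set M), (∀ (x : X) (z : (Xᶜ : Set M)), dist (x : M) (p x) ≤ dist (x : M) z) ∧
      Tendsto (fun x : X => dist (x : M) (p x)) cofinite (𝓝 0) ∧
      ∀ z, MapClusterPt z cofinite p := by
  have hXo : IsOpen X := by
    rw [← Set.biUnion_of_singleton X]
    exact isOpen_biUnion hXiso
  have hcpt : IsCompact Xᶜ := hXo.isClosed_compl.isCompact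
  have hne : (Xᶜ).Nonempty := by
    by_contra h
    have hX : X = Set.univ := by simpa [Set.not_nonempty_iff_eq_empty] using h
    exact hXi (finite_of_isCompact_of_isolated (hX ▸ isCompact_univ) hXiso)
  have key : ∀ x : X, ∃ w : (Xᶜ : Set M), Metric.infDist (x : M) Xᶜ = dist (x : M) w := fun x => by
    obtain ⟨w, hw, h⟩ := hcpt.exists_infDist_eq_dist hne (x : M)
    exact ⟨⟨w, hw⟩, h⟩
  choose p hp using key
  have hmin : ∀ (x : X) (z : (Xᶜ : Set M)), dist (x : M) (p x) ≤ dist (x : M) z := fun x z =>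
    hp x ▸ Metric.infDist_le_dist_of_mem z.2
  refine ⟨p, hmin, ?_, ?_⟩
  · rw [Metric.tendsto_nhds]
    intro ε hε
    have hclosed : IsClosed {x : M | ε ≤ Metric.infDist x Xᶜ} :=
      isClosed_le continuous_const (Metric.continuous_infDist_pt _)
    have hsub : {x : M | ε ≤ Metric.infDist x Xᶜ} ⊆ X := fun x hx => by
      by_contra hxX
      have : Metric.infDist x Xᶜ = 0 := Metric.infDist_zero_of_mem hxX
      have hx' : ε ≤ Metric.infDist x Xᶜ := hx
      linarith
    have hfin := finite_of_isCompact_of_isolated hclosed.isCompact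
      (fun x hx => hXiso x (hsub hx))
    refine (hfin.preimage (Subtype.val_injective (p := (· ∈ X))).injOn).subset ?_
    intro x hx
    simpa [hp x] using hx
  · intro z
    rw [mapClusterPt_iff_frequently]
    intro s hs
    obtain ⟨ε, hε, hball⟩ := Metric.mem_nhds_iff.1 hs
    intro hfin
    have hT : {x : X | p x ∈ s}.Finite := by
      simpa [Filter.Eventually, mem_cofinite, Set.compl_def] using hfin
    have hT' := hT.image (Subtype.val : X → M)
    have hz : (z : M) ∉ (Subtype.val : X → M) '' {x : X | p x ∈ s} := by
      rintro ⟨x, -, hx⟩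
      exact z.2 (hx ▸ x.2)
    obtain ⟨x, ⟨hx1, hx2⟩, hxX⟩ := hXd.inter_open_nonempty
      (Metric.ball (z : M) (ε / 2) ∩ ((Subtype.val : X → M) '' {x : X | p x ∈ s})ᶜ)
      (Metric.isOpen_ball.inter hT'.isClosed.isOpen_compl)
      ⟨z, Metric.mem_ball_self (by positivity), hz⟩
    refine hx2 ⟨⟨x, hxX⟩, hball ?_, rfl⟩
    have h1 := hmin ⟨x, hxX⟩ z
    have h2 := dist_triangle_left ((p ⟨x, hxX⟩ : (Xᶜ : Set M)) : M) z x
    rw [Metric.mem_ball] at hx1 ⊢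
    change dist ((p ⟨x, hxX⟩ : (Xᶜ : Set M)) : M) z < ε
    simp only at h1
    linarith

/-- Greedy choice of indices: if every point is a cluster point of `g`, then any sequence `f`
is asymptotic to a reindexing of `g` without repeated indices. -/
lemma exists_injective_close {K : Type*} [MetricSpace K] (f g : ℕ → K)
    (hg : ∀ z, MapClusterPt z cofinite g) :
    ∃ i : ℕ → ℕ, Function.Injective i ∧ ∀ n, dist (f n) (g (i n)) < 1 / ((n : ℝ) + 1) := by
  obtain ⟨φ, hφ, h⟩ := extraction_forall_of_frequently
    (P := fun n k => dist (f n) (g k) < 1 / ((n : ℝ) + 1)) (fun n => by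
      rw [← Nat.cofinite_eq_atTop]
      refine ((mapClusterPt_iff_frequently.1 (hg (f n))) _
        (Metric.ball_mem_nhds (f n) (Nat.one_div_pos_of_nat (n := n)))).mono fun k hk => ?_
      rwa [dist_comm])
  exact ⟨φ, hφ.injective, h⟩

/-- Sequences in a metric space for which every point is a cluster point agree asymptotically,
up to a permutation of the indices. -/
lemma exists_perm_tendsto {K : Type*} [MetricSpace K] (f g : ℕ → K)
    (hf : ∀ z, MapClusterPt z cofinite f) (hg : ∀ z, MapClusterPt z cofinite g) :
    ∃ b : ℕ ≃ ℕ, Tendsto (fun n => dist (f n) (g (b n))) cofinite (𝓝 0) := by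
  obtain ⟨i, hi, hi'⟩ := exists_injective_close f g hg
  obtain ⟨j, hj, hj'⟩ := exists_injective_close g f hf
  obtain ⟨h, hbij, hR⟩ := Function.Embedding.schroeder_bernstein_of_rel hi hj
    (fun m n => dist (f m) (g n) ≤ 1 / ((m : ℝ) + 1) + 1 / ((n : ℝ) + 1))
    (fun m => (hi' m).le.trans (le_add_of_nonneg_right (by positivity)))
    (fun n => by
      rw [dist_comm]
      exact (hj' n).le.trans (le_add_of_nonneg_left (by positivity)))
  refine ⟨Equiv.ofBijective h hbij, ?_⟩
  have h0 : Tendsto (fun n : ℕ => 1 / ((n : ℝ) + 1)) cofinite (𝓝 0) := by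
    rw [Nat.cofinite_eq_atTop]
    exact tendsto_one_div_add_atTop_nhds_zero_nat
  have h1 := h0.add (h0.comp hbij.injective.tendsto_cofinite)
  rw [add_zero] at h1
  exact squeeze_zero (fun _ => dist_nonneg) hR h1

lemma mapClusterPt_cofinite_comp_equiv {A B K : Type*} [TopologicalSpace K] (e : A ≃ B) (h : B → K)
    {z : K} (hz : MapClusterPt z cofinite h) : MapClusterPt z cofinite (h ∘ e) := by
  refine MapClusterPt.of_comp (φ := e.symm) e.symm.injective.tendsto_cofinite ?_
  simpa [Function.comp_assoc] using hz

/-- The pointed form of `exists_perm_tendsto`, for arbitrary countably infinite index types. -/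
lemma exists_equiv_tendsto {A B K : Type*} [Countable A] [Infinite A] [Countable B] [Infinite B]
    [MetricSpace K] (f : A → K) (g : B → K)
    (hf : ∀ z, MapClusterPt z cofinite f) (hg : ∀ z, MapClusterPt z cofinite g) (a₀ : A) (b₀ : B) :
    ∃ b : A ≃ B, b a₀ = b₀ ∧ Tendsto (fun a => dist (f a) (g (b a))) cofinite (𝓝 0) := by
  classical
  obtain ⟨eA⟩ := nonempty_equiv_of_countable (α := A) (β := ℕ)
  obtain ⟨eB⟩ := nonempty_equiv_of_countable (α := B) (β := ℕ)
  obtain ⟨c, hc⟩ := exists_perm_tendsto (f ∘ eA.symm) (g ∘ eB.symm)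
    (fun z => mapClusterPt_cofinite_comp_equiv _ _ (hf z))
    (fun z => mapClusterPt_cofinite_comp_equiv _ _ (hg z))
  have hc' := hc.comp eA.injective.tendsto_cofinite
  set d : A ≃ B := (eA.trans c).trans eB.symm with hd
  refine ⟨d.trans (Equiv.swap (d a₀) b₀), by simp, hc'.congr' ?_⟩
  -- The transposition moves only the images of `a₀` and `d.symm b₀`.
  have h1 : ∀ᶠ a in cofinite, a ≠ a₀ := (Set.finite_singleton a₀).eventually_cofinite_notMem
  have h2 : ∀ᶠ a in cofinite, a ≠ d.symm b₀ :=
    (Set.finite_singleton (d.symm b₀)).eventually_cofinite_notMem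
  filter_upwards [h1, h2] with a ha1 ha2
  have h3 : Equiv.swap (d a₀) b₀ (d a) = d a :=
    Equiv.swap_apply_of_ne_of_ne (fun h => ha1 (d.injective h))
      (fun h => ha2 (by rw [← h, Equiv.symm_apply_apply]))
  simp only [Equiv.trans_apply, h3]
  simp [hd]

/-- Gluing criterion: a map that is `ψ` on the closed remainder `Xᶜ` and `b` on the isolated
points `X` is continuous when `b` is asymptotic to `ψ ∘ p`, for `p` a nearest-point map. -/
lemma continuous_glue {M N : Type*} [MetricSpace M] [MetricSpace N] (X : Set M)
    (hXiso : ∀ x ∈ X, IsOpen ({x} : Set M)) (p : X → (Xᶜ : Set M))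
    (hmin : ∀ (x : X) (z : (Xᶜ : Set M)), dist (x : M) (p x) ≤ dist (x : M) z)
    (b : X → N) (ψ : (Xᶜ : Set M) → N) (hψ : Continuous ψ)
    (hb : Tendsto (fun x => dist (ψ (p x)) (b x)) cofinite (𝓝 0))
    (Φ : M → N) (hΦb : ∀ x : X, Φ x = b x) (hΦψ : ∀ z : (Xᶜ : Set M), Φ z = ψ z) :
    Continuous Φ := by
  rw [continuous_iff_continuousAt]
  intro z
  by_cases hz : z ∈ X
  · rw [ContinuousAt, (isOpen_singleton_iff_nhds_eq_pure z).1 (hXiso z hz)]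
    exact tendsto_pure_nhds Φ z
  rw [ContinuousAt, Metric.tendsto_nhds]
  intro ε hε
  obtain ⟨δ, hδ, hψδ⟩ := Metric.continuous_iff.1 hψ ⟨z, hz⟩ (ε / 2) (by positivity)
  have hT : {x : X | ¬ dist (ψ (p x)) (b x) < ε / 2}.Finite :=
    hb.eventually (gt_mem_nhds (by positivity))
  have hT' := hT.image (Subtype.val : X → M)
  have hzT : z ∉ (Subtype.val : X → M) '' {x : X | ¬ dist (ψ (p x)) (b x) < ε / 2} := by
    rintro ⟨x, -, rfl⟩
    exact hz x.2
  filter_upwards [Metric.ball_mem_nhds z (half_pos hδ), hT'.isClosed.isOpen_compl.mem_nhds hzT]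
    with u hu huT
  rw [Metric.mem_ball] at hu
  rw [hΦψ ⟨z, hz⟩]
  by_cases huX : u ∈ X
  · have h1 : dist (ψ (p ⟨u, huX⟩)) (b ⟨u, huX⟩) < ε / 2 := by
      by_contra h
      exact huT ⟨⟨u, huX⟩, h, rfl⟩
    have h2 : dist (p ⟨u, huX⟩) ⟨z, hz⟩ < δ := by
      have h3 : dist u (p ⟨u, huX⟩) ≤ dist u z := hmin ⟨u, huX⟩ ⟨z, hz⟩
      have h4 := dist_triangle_left ((p ⟨u, huX⟩ : (Xᶜ : Set M)) : M) z u
      change dist ((p ⟨u, huX⟩ : (Xᶜ : Set M)) : M) z < δ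
      linarith
    have h5 := hψδ _ h2
    rw [hΦb ⟨u, huX⟩]
    have h6 := dist_triangle_left (b ⟨u, huX⟩) (ψ ⟨z, hz⟩) (ψ (p ⟨u, huX⟩))
    linarith
  · rw [hΦψ ⟨u, huX⟩]
    have h7 : dist (⟨u, huX⟩ : (Xᶜ : Set M)) ⟨z, hz⟩ < δ := by
      change dist u z < δ
      linarith
    linarith [hψδ _ h7]


/-- As in Statement 0, but additionally fixing `x₀ ∈ X` and `y₀ ∈ Y`,
the bijection `b : X → Y` can be chosen with `b x₀ = y₀`. -/
theorem stmt1 {M N : Type*} [MetricSpace M] [CompactSpace M] [MetricSpace N] [CompactSpace N]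
    (X : Set M) (Y : Set N)
    (hXc : X.Countable) (hXi : X.Infinite) (hXd : Dense X)
    (hXiso : ∀ x ∈ X, IsOpen ({x} : Set M))
    (hYc : Y.Countable) (hYi : Y.Infinite) (hYd : Dense Y)
    (hYiso : ∀ y ∈ Y, IsOpen ({y} : Set N))
    (ψ : (Xᶜ : Set M) ≃ₜ (Yᶜ : Set N))
    (x₀ : M) (hx₀ : x₀ ∈ X) (y₀ : N) (hy₀ : y₀ ∈ Y) :
    ∃ b : X → Y, Function.Bijective b ∧ b ⟨x₀, hx₀⟩ = ⟨y₀, hy₀⟩ ∧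
      ∃ Φ : M ≃ₜ N, (∀ x : X, Φ (x : M) = (b x : N)) ∧
        (∀ z : (Xᶜ : Set M), Φ (z : M) = (ψ z : N)) := by
  classical
  have := hXc.to_subtype
  have := hYc.to_subtype
  have := hXi.to_subtype
  have := hYi.to_subtype
  obtain ⟨p, hpmin, -, hpc⟩ := exists_nearest X hXi hXd hXiso
  obtain ⟨q, -, hq0, hqc⟩ := exists_nearest Y hYi hYd hYiso
  have hψp : ∀ z, MapClusterPt z cofinite (ψ ∘ p) := fun z => by
    simpa using (hpc (ψ.symm z)).continuousAt_comp ψ.continuous.continuousAt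
  obtain ⟨b, hb0, hb⟩ := exists_equiv_tendsto (ψ ∘ p) q hψp hqc ⟨x₀, hx₀⟩ ⟨y₀, hy₀⟩
  let e : M ≃ N := (Equiv.Set.sumCompl X).symm.trans
    ((Equiv.sumCongr b ψ.toEquiv).trans (Equiv.Set.sumCompl Y))
  have heX : ∀ x : X, e x = b x := fun x => by
    simp [e, Equiv.Set.sumCompl_symm_apply_of_mem x.2]
  have heψ : ∀ z : (Xᶜ : Set M), e z = ψ z := fun z => by
    simp [e, Equiv.Set.sumCompl_symm_apply_of_notMem z.2]
  have hlim : Tendsto (fun x : X => dist (ψ (p x) : N) (b x)) cofinite (𝓝 0) := by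
    have h := hb.add (hq0.comp b.injective.tendsto_cofinite)
    rw [add_zero] at h
    refine squeeze_zero (fun _ => dist_nonneg) (fun x => ?_) h
    exact dist_triangle_right (ψ (p x) : N) (b x) (q (b x))
  have hcont : Continuous e :=
    continuous_glue X hXiso p hpmin (fun x => (b x : N)) (fun z => (ψ z : N))
      (continuous_subtype_val.comp ψ.continuous) hlim e heX heψ
  exact ⟨b, b.bijective, hb0, hcont.homeoOfEquivCompactToT2, heX, heψ⟩
end

section
/- Let X be a compact metric space and let Y ⊆ X be a countably infinite dense subset such that every point of Y is an isolated point of X. Set ∂X := X \ Y. Then there exist subsets Y₁, Y₂ ⊆ Y with Y = Y₁ ⊔ Y₂ (disjoint union), together with bijections φ₁ : Y → Y₁ and φ₂ : Y → Y₂, such that for i = 1, 2 the map from X to the subspace Yᵢ ∪ ∂X of X which equals φᵢ on Y and equals the identity on ∂X is a homeomorphism. -/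
/-!
Any map on `Y` which moves all but finitely many points by less than `ε`, for every `ε > 0`,
extends continuously to `X` by the identity on `∂X`, since a neighbourhood of a boundary point may
be shrunk to avoid any finite subset of `Y`. If the map is injective, the extension is a homeomorphism
onto its image by compactness (`exists_homeomorph_extension`). So it suffices to find a bijection
`h : Y × Bool → Y` such that `dist (h (y, b)) y → 0` as `(y, b)` leaves finite sets; the images of
`Y × {false}` and `Y × {true}` are then `Y₁` and `Y₂`.

By compactness the points of `Y` tend to `∂X` (`finite_le_infDist`), and every point of `∂X` is a
limit of infinitely many points of `Y` (`infinite_ball_inter`). Enumerating `Y × Bool`, one can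
therefore send the `n`-th pair `(y, b)` to a point of `Y` within `1 / (n + 1)` of a boundary
point nearest to `y`, and keep the choices distinct (`exists_injective_forall_mem`); this gives an
injection `f : Y × Bool → Y` with small displacement. The Schröder–Bernstein theorem, applied to `f` and
to `y ↦ (y, false)`, turns it into a bijection whose displacement at each point is either that of
`f` or zero.
-/

/-- A sequence of infinite sets has an injective choice function. This follows from Hall's marriage
theorem applied to subsets of size `n + 1` of the `n`-th set. -/
theorem exists_injective_forall_mem {α : Type*} (S : ℕ → Set α) (hS : ∀ n, (S n).Infinite) :
    ∃ f : ℕ → α, Function.Injective f ∧ ∀ n, f n ∈ S n := by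
  classical
  choose t htS htc using fun n => (hS n).exists_subset_card_eq (n + 1)
  obtain ⟨f, hf, hft⟩ := (Finset.all_card_le_biUnion_card_iff_exists_injective t).1 (by
    intro s
    rcases s.eq_empty_or_nonempty with rfl | hs
    · simp
    · calc s.card ≤ (Finset.range (s.max' hs + 1)).card := by
            apply Finset.card_le_card
            intro x hx
            have := s.le_max' x hx
            simp only [Finset.mem_range]
            omega
        _ = (t (s.max' hs)).card := by rw [Finset.card_range, htc]
        _ ≤ (s.biUnion t).card :=
            Finset.card_le_card (Finset.subset_biUnion_of_mem t (s.max'_mem hs)))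
  exact ⟨f, hf, fun n => htS n (hft n)⟩

theorem infinite_ball_inter {X : Type*} [MetricSpace X] {Y : Set X} (hYd : Dense Y)
    {z : X} (hz : z ∉ Y) {ε : ℝ} (hε : 0 < ε) : (Metric.ball z ε ∩ Y).Infinite := by
  intro hfin
  have ho : IsOpen (Metric.ball z ε \ (Metric.ball z ε ∩ Y)) :=
    Metric.isOpen_ball.sdiff hfin.isClosed
  obtain ⟨x, hxY, hxU⟩ := hYd.exists_mem_open ho ⟨z, Metric.mem_ball_self hε, fun h => hz h.2⟩
  exact hxU.2 ⟨hxU.1, hxY⟩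

/-- Only finitely many points of `X` are at distance at least `ε` from `∂X`: they form a compact set,
contained in `Y` and hence discrete. -/
theorem finite_le_infDist {X : Type*} [MetricSpace X] [CompactSpace X] {Y : Set X}
    (hYiso : ∀ y ∈ Y, IsOpen ({y} : Set X)) {ε : ℝ} (hε : 0 < ε) :
    {x : X | ε ≤ Metric.infDist x Yᶜ}.Finite := by
  have hK : IsCompact {x : X | ε ≤ Metric.infDist x Yᶜ} :=
    (isClosed_le continuous_const (Metric.continuous_infDist_pt _)).isCompact
  have hKY : {x : X | ε ≤ Metric.infDist x Yᶜ} ⊆ Y := by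
    intro x hx
    by_contra hxY
    have h0 : Metric.infDist x Yᶜ = 0 := Metric.infDist_zero_of_mem hxY
    simp only [Set.mem_ofPred_eq] at hx
    linarith
  obtain ⟨t, ht⟩ := hK.elim_finite_subcover (fun y : Y => ({(y : X)} : Set X))
    (fun y => hYiso y y.2) (fun x hx => Set.mem_iUnion.2 ⟨⟨x, hKY hx⟩, rfl⟩)
  exact (t.finite_toSet.biUnion fun y _ => Set.finite_singleton (y : X)).subset ht

/-- An injective self-map of `Y` with displacement tending to zero extends by the identity on `∂X` to
a homeomorphism onto its image. -/
theorem exists_homeomorph_extension {X : Type*} [MetricSpace X] [CompactSpace X] {Y : Set X}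
    (hYiso : ∀ y ∈ Y, IsOpen ({y} : Set X)) (φ : Y → Y) (hφ : Function.Injective φ)
    (hd : ∀ ε > 0, {y : Y | ε ≤ dist (φ y) y}.Finite) (Z : Set X)
    (hZ : Z = Set.range fun y => (φ y : X)) :
    ∃ Φ : X ≃ₜ (Z ∪ Yᶜ : Set X),
      (∀ y : Y, (Φ (y : X) : X) = φ y) ∧ (∀ z ∈ (Yᶜ : Set X), (Φ z : X) = z) := by
  classical
  subst hZ
  let F : X → X := fun x => if h : x ∈ Y then φ ⟨x, h⟩ else x
  have hFY : ∀ y : Y, F y = φ y := fun y => by simp [F]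
  have hFc : ∀ z ∉ Y, F z = z := fun z hz => by simp [F, hz]
  have hcont : Continuous F := by
    rw [continuous_iff_continuousAt]
    intro x
    by_cases hx : x ∈ Y
    · have h1 : nhds x = pure x := (isOpen_singleton_iff_nhds_eq_pure x).1 (hYiso x hx)
      rw [ContinuousAt, h1]
      exact Filter.tendsto_pure_left.2 fun s hs => mem_of_mem_nhds hs
    · rw [Metric.continuousAt_iff']
      intro ε hε
      -- The finitely many points moved by at least `ε / 2` all lie in `Y`, so `x` avoids them.
      have hfin := (hd (ε / 2) (by positivity)).image (Subtype.val : Y → X)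
      have hmem : (Subtype.val '' {y : Y | ε / 2 ≤ dist (φ y) y} : Set X)ᶜ ∈ nhds x := by
        apply hfin.isClosed.isOpen_compl.mem_nhds
        rintro ⟨y, -, rfl⟩
        exact hx y.2
      filter_upwards [hmem, Metric.ball_mem_nhds x (half_pos hε)] with w hw hwb
      rw [hFc x hx]
      rw [Metric.mem_ball] at hwb
      by_cases hwY : w ∈ Y
      · have h2 : dist (φ ⟨w, hwY⟩ : X) w < ε / 2 := by
          by_contra! h
          exact hw ⟨⟨w, hwY⟩, h, rfl⟩
        have h3 : F w = φ ⟨w, hwY⟩ := hFY ⟨w, hwY⟩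
        rw [h3]
        linarith [dist_triangle (φ ⟨w, hwY⟩ : X) w x]
      · rw [hFc w hwY]
        linarith
  have hmaps : ∀ x, F x ∈ (Set.range fun y => (φ y : X)) ∪ Yᶜ := by
    intro x
    by_cases hx : x ∈ Y
    · exact Or.inl ⟨⟨x, hx⟩, (hFY ⟨x, hx⟩).symm⟩
    · rw [hFc x hx]
      exact Or.inr hx
  let G : X → ((Set.range fun y => (φ y : X)) ∪ Yᶜ : Set X) := fun x => ⟨F x, hmaps x⟩
  have hG : Function.Bijective G := by
    constructor
    · intro a b hab
      have hab' : F a = F b := congrArg Subtype.val hab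
      by_cases ha : a ∈ Y <;> by_cases hb : b ∈ Y
      · lift a to Y using ha
        lift b to Y using hb
        rw [hFY, hFY] at hab'
        rw [hφ (Subtype.ext hab')]
      · lift a to Y using ha
        rw [hFY, hFc b hb] at hab'
        exact absurd (hab' ▸ (φ a).2) hb
      · lift b to Y using hb
        rw [hFY, hFc a ha] at hab'
        exact absurd (hab' ▸ (φ b).2) ha
      · rwa [hFc a ha, hFc b hb] at hab'
    · rintro ⟨_, ⟨y, rfl⟩ | hz⟩
      · exact ⟨y, Subtype.ext (hFY y)⟩
      · exact ⟨_, Subtype.ext (hFc _ hz)⟩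
  have hGc : Continuous (Equiv.ofBijective G hG) := hcont.subtype_mk hmaps
  exact ⟨hGc.homeoOfEquivCompactToT2, hFY, hFc⟩

/-- Two disjoint copies of `Y` embed into `Y` with displacement tending to
zero. -/
theorem exists_injective_prod_bool {X : Type*} [MetricSpace X] [CompactSpace X] {Y : Set X}
    (hYc : Y.Countable) (hYi : Y.Infinite) (hYd : Dense Y)
    (hYiso : ∀ y ∈ Y, IsOpen ({y} : Set X)) :
    ∃ f : Y × Bool → Y, Function.Injective f ∧
      ∀ ε > 0, {a : Y × Bool | ε ≤ dist (f a) a.1}.Finite := by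
  have : Countable Y := hYc.to_subtype
  have hopen : IsOpen Y := by
    rw [← Set.biUnion_of_singleton Y]
    exact isOpen_biUnion hYiso
  have hne : (Yᶜ : Set X).Nonempty := by
    rw [Set.nonempty_iff_ne_empty]
    intro h
    have : DiscreteTopology X := by
      rw [discreteTopology_iff_isOpen_singleton]
      exact fun x => hYiso x (Set.compl_empty_iff.1 h ▸ Set.mem_univ x)
    exact hYi (isCompact_univ.finite_of_discrete.subset (Set.subset_univ Y))
  obtain ⟨code, hcode⟩ := exists_injective_nat (Y × Bool)
  choose z hz hzd using fun x : X => hopen.isClosed_compl.isCompact.exists_infDist_eq_dist hne x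
  -- `code` need not be surjective; its left inverse `invFun code` is used to index the infinite sets
  -- by all of `ℕ`, and indices outside the range of `code` play no role.
  have : Nonempty (Y × Bool) := ⟨(⟨_, hYi.nonempty.some_mem⟩, false)⟩
  obtain ⟨g, hg, hgS⟩ := exists_injective_forall_mem
    (fun n => Metric.ball (z (Function.invFun code n).1) (1 / ((n : ℝ) + 1)) ∩ Y)
    (fun n => infinite_ball_inter hYd (hz _) Nat.one_div_pos_of_nat)
  refine ⟨fun a => ⟨g (code a), (hgS (code a)).2⟩, ?_, ?_⟩
  · intro a b hab
    exact hcode (hg (congrArg Subtype.val hab))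
  · intro ε hε
    have h1 : {a : Y × Bool | ε / 2 ≤ Metric.infDist (a.1 : X) Yᶜ}.Finite := by
      have h : {y : Y | ε / 2 ≤ Metric.infDist (y : X) Yᶜ}.Finite :=
        (finite_le_infDist hYiso (half_pos hε)).preimage (f := (Subtype.val : Y → X))
          Subtype.val_injective.injOn
      exact (h.prod (Set.finite_univ (α := Bool))).subset fun a ha => ⟨ha, trivial⟩
    obtain ⟨N, hN⟩ := exists_nat_one_div_lt (half_pos hε)
    have h2 : {a : Y × Bool | code a < N}.Finite :=
      (Set.finite_Iio N).preimage hcode.injOn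
    refine (h1.union h2).subset fun a ha => ?_
    by_contra hcon
    simp only [Set.mem_union, Set.mem_ofPred_eq, not_or, not_le, not_lt] at hcon ha
    have h3 := (hgS (code a)).1
    rw [Function.leftInverse_invFun hcode a, Metric.mem_ball] at h3
    have h4 : 1 / ((code a : ℝ) + 1) ≤ 1 / ((N : ℝ) + 1) := Nat.one_div_le_one_div hcon.2
    have h5 := hcon.1
    rw [hzd] at h5
    have h6 := dist_triangle_right (g (code a)) (a.1 : X) (z a.1)
    have h7 : ε ≤ dist (g (code a)) (a.1 : X) := ha
    linarith


/-- Let `X` be a compact metric space and `Y ⊆ X` a countably infinite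
dense subset consisting of isolated points of `X`; set `∂X := X \ Y`. Then there is a
partition `Y = Y₁ ⊔ Y₂` and bijections `φᵢ : Y → Yᵢ` such that for `i = 1, 2` the map
from `X` to the subspace `Yᵢ ∪ ∂X` equal to `φᵢ` on `Y` and to the identity on `∂X`
is a homeomorphism. -/
theorem stmt4 {X : Type*} [MetricSpace X] [CompactSpace X] (Y : Set X)
    (hYc : Y.Countable) (hYi : Y.Infinite) (hYd : Dense Y)
    (hYiso : ∀ y ∈ Y, IsOpen ({y} : Set X)) :
    ∃ Y₁ Y₂ : Set X, Y₁ ⊆ Y ∧ Y₂ ⊆ Y ∧ Disjoint Y₁ Y₂ ∧ Y₁ ∪ Y₂ = Y ∧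
      ∃ φ₁ : Y → Y₁, Function.Bijective φ₁ ∧
      ∃ φ₂ : Y → Y₂, Function.Bijective φ₂ ∧
      (∃ Φ₁ : X ≃ₜ (Y₁ ∪ Yᶜ : Set X),
        (∀ y : Y, (Φ₁ (y : X) : X) = (φ₁ y : X)) ∧
        (∀ z ∈ (Yᶜ : Set X), (Φ₁ z : X) = z)) ∧
      (∃ Φ₂ : X ≃ₜ (Y₂ ∪ Yᶜ : Set X),
        (∀ y : Y, (Φ₂ (y : X) : X) = (φ₂ y : X)) ∧
        (∀ z ∈ (Yᶜ : Set X), (Φ₂ z : X) = z)) := by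
  obtain ⟨f, hf, hfd⟩ := exists_injective_prod_bool hYc hYi hYd hYiso
  obtain ⟨h, hh, hR⟩ := Function.Embedding.schroeder_bernstein_of_rel (f := f)
    (g := fun y : Y => (y, false)) hf (fun a b hab => congrArg Prod.fst hab)
    (fun a b => b = f a ∨ a = (b, false)) (fun a => Or.inl rfl) (fun b => Or.inr rfl)
  have hd : ∀ b : Bool, ∀ ε > 0, {y : Y | ε ≤ dist (h (y, b)) y}.Finite := by
    intro b ε hε
    refine ((hfd ε hε).preimage (f := fun y : Y => (y, b))
      (fun a _ c _ hac => congrArg Prod.fst hac)).subset fun y hy => ?_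
    simp only [Set.mem_ofPred_eq, Set.mem_preimage] at hy ⊢
    rcases hR (y, b) with h1 | h1
    · rwa [← h1]
    · have h2 : h (y, b) = y := (congrArg Prod.fst h1).symm
      rw [h2, dist_self] at hy
      exact absurd hy hε.not_ge
  have hinj : ∀ b : Bool, Function.Injective fun y : Y => h (y, b) :=
    fun b x y hxy => congrArg Prod.fst (hh.1 hxy)
  have hbij : ∀ b : Bool, Function.Bijective
      (Set.rangeFactorization fun y : Y => (h (y, b) : X)) := fun b =>
    ⟨fun x y hxy => hinj b (Subtype.ext (Subtype.mk.inj hxy)),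
      Set.rangeFactorization_surjective⟩
  refine ⟨Set.range fun y : Y => (h (y, false) : X), Set.range fun y : Y => (h (y, true) : X),
    ?_, ?_, ?_, ?_, _, hbij false, _, hbij true,
    exists_homeomorph_extension hYiso _ (hinj false) (hd false) _ rfl,
    exists_homeomorph_extension hYiso _ (hinj true) (hd true) _ rfl⟩
  · rintro _ ⟨y, rfl⟩
    exact (h (y, false)).2
  · rintro _ ⟨y, rfl⟩
    exact (h (y, true)).2
  · rw [Set.disjoint_left]
    rintro _ ⟨x, rfl⟩ ⟨y, hy⟩
    have h1 := congrArg Prod.snd (hh.1 (Subtype.ext hy))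
    simp at h1
  · ext w
    constructor
    · rintro (⟨y, rfl⟩ | ⟨y, rfl⟩)
      · exact (h (y, false)).2
      · exact (h (y, true)).2
    · intro hw
      obtain ⟨⟨y, b⟩, hy⟩ := hh.2 ⟨w, hw⟩
      cases b
      · exact Or.inl ⟨y, congrArg Subtype.val hy⟩
      · exact Or.inr ⟨y, congrArg Subtype.val hy⟩
end

section
/- Let X be a compact metric space, let Y ⊆ X be a countably infinite dense subset such that every point of Y is an isolated point of X, and set ∂X := X \ Y. Let n ≥ 1 be a natural number. Then there exist pairwise disjoint subsets Y₁, …, Yₙ ⊆ Y with Y = Y₁ ⊔ ⋯ ⊔ Yₙ, together with bijections φᵢ : Y → Yᵢ for 1 ≤ i ≤ n, such that for each i the map from X to the subspace Yᵢ ∪ ∂X of X which equals φᵢ on Y and equals the identity on ∂X is a homeomorphism. -/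
/-!
The partition is read off from a bijection `F : Y × Fin n → Y` that moves points less and less:
for every `ε > 0`, all but finitely many `(y, i)` satisfy `dist y (F (y, i)) < ε`. Given such an
`F`, put `φᵢ y = F (y, i)` and `Yᵢ = φᵢ(Y)`; the extension of `φᵢ` by the identity on `Yᶜ` is
continuous (`continuous_extension`), and a continuous bijection from a compact space to a Hausdorff
space is a homeomorphism.

By compactness all but finitely many points of `Y` are within `ε` of `Yᶜ` (`finite_far`), and by
density every point of `Yᶜ` is a limit of points of `Y` avoiding any finite set. A greedy choice
therefore gives an *injection* `f : Y × Fin n → Y` with vanishing displacement. In the other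
direction `y ↦ (y, 0)` is an injection with no displacement at all. The Schröder–Bernstein bijection
built from these two agrees at each point either with `f` or with the inverse of `y ↦ (y, 0)`, so
its displacement vanishes too.
-/

/-- Greedy choice of distinct representatives: if each `a` in a countable set admits a suitable `b`
outside any given finite set, then suitable elements can be chosen injectively. -/
theorem exists_injective_choice {A B : Type*} [Infinite B] (enc : A → ℕ)
    (henc : Function.Injective enc) (P : A → B → Prop)
    (h : ∀ a, ∀ s : Finset B, ∃ b, b ∉ s ∧ P a b) :
    ∃ f : A → B, Function.Injective f ∧ ∀ a, P a (f a) := by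
  classical
  have h' : ∀ (k : ℕ) (s : Finset B), ∃ b, b ∉ s ∧ ∀ a, enc a = k → P a b := by
    intro k s
    by_cases hk : ∃ a, enc a = k
    · obtain ⟨a, rfl⟩ := hk
      obtain ⟨b, hb, hP⟩ := h a s
      exact ⟨b, hb, fun a' ha' => henc ha' ▸ hP⟩
    · obtain ⟨b, hb⟩ := Infinite.exists_notMem_finset s
      exact ⟨b, hb, fun a ha => (hk ⟨a, ha⟩).elim⟩
  choose c hc hcP using h'
  -- `L k` collects the values chosen before stage `k`.
  let L : ℕ → Finset B := fun k => Nat.rec ∅ (fun k s => insert (c k s) s) k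
  have hL : ∀ k, L (k + 1) = insert (c k (L k)) (L k) := fun _ => rfl
  have hmono : Monotone L := monotone_nat_of_le_succ fun k => by
    rw [hL]; exact Finset.subset_insert _ _
  have hne : ∀ j k, j < k → c j (L j) ≠ c k (L k) := by
    intro j k hjk he
    apply hc k (L k)
    rw [← he]
    apply hmono (Nat.succ_le_of_lt hjk)
    rw [Nat.succ_eq_add_one, hL]
    exact Finset.mem_insert_self _ _
  refine ⟨fun a => c (enc a) (L (enc a)), fun a a' he => henc ?_, fun a => hcP _ _ a rfl⟩
  rcases lt_trichotomy (enc a) (enc a') with hlt | heq | hlt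
  · exact (hne _ _ hlt he).elim
  · exact heq
  · exact (hne _ _ hlt he.symm).elim

theorem finite_of_isClosed_subset {X : Type*} [TopologicalSpace X] [CompactSpace X] {Y T : Set X}
    (hYiso : ∀ y ∈ Y, IsOpen ({y} : Set X)) (hT : IsClosed T) (hTY : T ⊆ Y) : T.Finite := by
  apply hT.isCompact.finite
  rw [isDiscrete_iff_forall_mem_exists_isOpen]
  intro y hy
  exact ⟨{y}, hYiso y (hTY hy), by simpa using hy⟩

theorem finite_far {X : Type*} [MetricSpace X] [CompactSpace X] {Y : Set X}
    (hYiso : ∀ y ∈ Y, IsOpen ({y} : Set X)) {ε : ℝ} (hε : 0 < ε) :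
    {y : Y | ε ≤ Metric.infDist (y : X) Yᶜ}.Finite := by
  have hfin : {x : X | ε ≤ Metric.infDist x Yᶜ}.Finite := by
    refine finite_of_isClosed_subset hYiso
      (isClosed_le continuous_const (Metric.continuous_infDist_pt _)) ?_
    intro x hx
    by_contra hxY
    have h0 : Metric.infDist x Yᶜ = 0 := Metric.infDist_zero_of_mem hxY
    have hx' : ε ≤ Metric.infDist x Yᶜ := hx
    linarith
  exact Set.Finite.preimage (f := fun y : Y => (y : X)) Subtype.val_injective.injOn hfin

theorem exists_injection {X : Type*} [MetricSpace X] [CompactSpace X] (Y : Set X)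
    (hYc : Y.Countable) (hYi : Y.Infinite) (hYd : Dense Y)
    (hYiso : ∀ y ∈ Y, IsOpen ({y} : Set X)) (n : ℕ) :
    ∃ f : Y × Fin n → Y, Function.Injective f ∧
      ∀ ε : ℝ, 0 < ε → {p | ε ≤ dist p.1 (f p)}.Finite := by
  have : Countable Y := hYc
  have : Infinite Y := hYi.to_subtype
  obtain ⟨enc, henc⟩ := exists_injective_nat (Y × Fin n)
  have hne : (Yᶜ : Set X).Nonempty := by
    by_contra hempty
    rw [Set.not_nonempty_iff_eq_empty, Set.compl_empty_iff] at hempty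
    exact hYi (finite_of_isClosed_subset hYiso (hempty ▸ isClosed_univ) subset_rfl)
  obtain ⟨f, hf, hfd⟩ := exists_injective_choice enc henc
    (fun p y => dist p.1 y < Metric.infDist (p.1 : X) Yᶜ + 1 / ((enc p : ℝ) + 1)) (by
      intro p s
      have hpos : 0 < 1 / ((enc p : ℝ) + 1) := by positivity
      obtain ⟨z, hz, hpz⟩ := (Metric.infDist_lt_iff hne).1 (lt_add_of_pos_right
        (Metric.infDist (p.1 : X) Yᶜ) hpos)
      -- The condition on `x` is open and holds at `z ∉ Y`, hence at some point of `Y` off `s`.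
      have hopen : IsOpen ({x : X | dist (p.1 : X) x <
          Metric.infDist (p.1 : X) Yᶜ + 1 / ((enc p : ℝ) + 1)} ∩ (Subtype.val '' (s : Set Y))ᶜ) :=
        (isOpen_lt (by fun_prop) continuous_const).inter
          (s.finite_toSet.image _).isClosed.isOpen_compl
      obtain ⟨y, ⟨hy, hys⟩, hyY⟩ := hYd.inter_open_nonempty _ hopen ⟨z, hpz, by
        rintro ⟨y, -, rfl⟩
        exact hz y.2⟩
      exact ⟨⟨y, hyY⟩, fun hmem => hys ⟨_, hmem, rfl⟩, hy⟩)
  refine ⟨f, hf, fun ε hε => ?_⟩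
  obtain ⟨N, hN⟩ := exists_nat_one_div_lt (half_pos hε)
  refine (((finite_far hYiso (half_pos hε)).prod (Set.finite_univ (α := Fin n))).union
    ((Set.finite_lt_nat N).preimage henc.injOn)).subset ?_
  intro p hp
  by_contra hcon
  simp only [Set.mem_union, Set.mem_prod, Set.mem_ofPred_eq, Set.mem_univ, and_true,
    Set.mem_preimage, not_or, not_le, not_lt] at hcon hp
  have h1 : 1 / ((enc p : ℝ) + 1) ≤ 1 / ((N : ℝ) + 1) :=
    one_div_le_one_div_of_le (by positivity) (by exact_mod_cast Nat.succ_le_succ hcon.2)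
  have := hfd p
  linarith [hcon.1]

theorem exists_bijection {X : Type*} [MetricSpace X] [CompactSpace X] (Y : Set X)
    (hYc : Y.Countable) (hYi : Y.Infinite) (hYd : Dense Y)
    (hYiso : ∀ y ∈ Y, IsOpen ({y} : Set X)) (n : ℕ) (hn : 1 ≤ n) :
    ∃ F : Y × Fin n → Y, Function.Bijective F ∧
      ∀ ε : ℝ, 0 < ε → {p | ε ≤ dist p.1 (F p)}.Finite := by
  obtain ⟨f, hf, hfd⟩ := exists_injection Y hYc hYi hYd hYiso n
  let g : Y → Y × Fin n := fun y => (y, ⟨0, hn⟩)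
  have hg : Function.Injective g := fun y y' h => congrArg Prod.fst h
  obtain ⟨F, hF, hFR⟩ := Function.Embedding.schroeder_bernstein_of_rel hf hg
    (fun p y => y = f p ∨ p = g y) (fun _ => Or.inl rfl) (fun _ => Or.inr rfl)
  refine ⟨F, hF, fun ε hε => (hfd ε hε).subset fun p hp => ?_⟩
  rcases hFR p with h | h
  · simpa only [Set.mem_ofPred_eq, h] using hp
  · have h1 : p.1 = F p := congrArg Prod.fst h
    have hp' : ε ≤ dist p.1 (F p) := hp
    rw [← h1, dist_self] at hp'
    exact absurd hp' (not_le.2 hε)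

open Classical in
/-- Extending a self-map of `Y` with vanishing displacement by the identity on `Yᶜ` gives a
continuous map: there is nothing to check at the isolated points of `Y`, and a neighbourhood of a
point of `Yᶜ` can be shrunk to miss the finitely many points of `Y` that move far. -/
theorem continuous_extension {X : Type*} [MetricSpace X] {Y : Set X}
    (hYiso : ∀ y ∈ Y, IsOpen ({y} : Set X)) (φ : Y → Y)
    (hφ : ∀ ε : ℝ, 0 < ε → {y | ε ≤ dist y (φ y)}.Finite) :
    Continuous fun x : X => if h : x ∈ Y then (φ ⟨x, h⟩ : X) else x := by
  rw [continuous_iff_continuousAt]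
  intro x
  by_cases hx : x ∈ Y
  · rw [ContinuousAt, (isOpen_singleton_iff_nhds_eq_pure x).1 (hYiso x hx)]
    exact tendsto_pure_nhds _ _
  · rw [ContinuousAt, Metric.tendsto_nhds]
    intro ε hε
    have hT : (Subtype.val '' {y : Y | ε / 2 ≤ dist y (φ y)} : Set X)ᶜ ∈ nhds x :=
      ((hφ _ (half_pos hε)).image _).isClosed.isOpen_compl.mem_nhds (by
        rintro ⟨y, -, rfl⟩
        exact hx y.2)
    filter_upwards [hT, Metric.ball_mem_nhds x (half_pos hε)] with w hw hwx
    rw [Metric.mem_ball] at hwx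
    rw [dif_neg hx]
    by_cases hwY : w ∈ Y
    · rw [dif_pos hwY]
      have h1 : dist w (φ ⟨w, hwY⟩ : X) < ε / 2 := by
        by_contra hcon
        exact hw ⟨⟨w, hwY⟩, not_lt.1 hcon, rfl⟩
      have h2 := dist_triangle_left (φ ⟨w, hwY⟩ : X) x w
      linarith
    · rw [dif_neg hwY]
      linarith


/-- Let `X` be a compact metric space and `Y ⊆ X` a countably infinite
dense subset consisting of isolated points of `X`; set `∂X := X \ Y`. For every `n ≥ 1`
there are pairwise disjoint subsets `Y₁, …, Yₙ` of `Y` with union `Y` and bijections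
`φᵢ : Y → Yᵢ` such that for each `i` the map from `X` to the subspace `Yᵢ ∪ ∂X` equal to
`φᵢ` on `Y` and to the identity on `∂X` is a homeomorphism. -/
theorem stmt5 {X : Type*} [MetricSpace X] [CompactSpace X] (Y : Set X)
    (hYc : Y.Countable) (hYi : Y.Infinite) (hYd : Dense Y)
    (hYiso : ∀ y ∈ Y, IsOpen ({y} : Set X))
    (n : ℕ) (hn : 1 ≤ n) :
    ∃ Ys : Fin n → Set X,
      (∀ i, Ys i ⊆ Y) ∧
      (Pairwise fun i j => Disjoint (Ys i) (Ys j)) ∧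
      (⋃ i, Ys i) = Y ∧
      ∀ i, ∃ φ : Y → Ys i, Function.Bijective φ ∧
        ∃ Φ : X ≃ₜ (Ys i ∪ Yᶜ : Set X),
          (∀ y : Y, (Φ (y : X) : X) = (φ y : X)) ∧
          (∀ z ∈ (Yᶜ : Set X), (Φ z : X) = z) := by
  classical
  obtain ⟨F, hF, hFd⟩ := exists_bijection Y hYc hYi hYd hYiso n hn
  refine ⟨fun i => Set.range fun y : Y => (F (y, i) : X), ?_, ?_, ?_, ?_⟩
  · rintro i _ ⟨y, rfl⟩
    exact (F (y, i)).2
  · intro i j hij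
    refine Set.disjoint_left.2 ?_
    rintro _ ⟨y, rfl⟩ ⟨y', h⟩
    exact hij (congrArg Prod.snd (hF.1 (Subtype.ext h))).symm
  · ext x
    rw [Set.mem_iUnion]
    constructor
    · rintro ⟨i, y, rfl⟩
      exact (F (y, i)).2
    · intro hx
      obtain ⟨⟨y, i⟩, h⟩ := hF.2 ⟨x, hx⟩
      exact ⟨i, y, congrArg Subtype.val h⟩
  · intro i
    have hinj : Function.Injective fun y : Y => (F (y, i) : X) := fun y y' h =>
      congrArg Prod.fst (hF.1 (Subtype.ext h))
    have hcont := continuous_extension hYiso (fun y => F (y, i)) (fun ε hε =>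
      (hFd ε hε).preimage (f := fun y : Y => (y, i))
        (fun y _ y' _ h => congrArg Prod.fst h))
    set G : X → X := fun x => if h : x ∈ Y then (F (⟨x, h⟩, i) : X) else x with hG
    have hGpos : ∀ y : Y, G y = F (y, i) := fun y => dif_pos y.2
    have hGneg : ∀ z, z ∉ Y → G z = z := fun z hz => dif_neg hz
    have hGmem : ∀ x, G x ∈ (Set.range fun y : Y => (F (y, i) : X)) ∪ Yᶜ := by
      intro x
      by_cases hx : x ∈ Y
      · exact Or.inl ⟨⟨x, hx⟩, (hGpos ⟨x, hx⟩).symm⟩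
      · exact Or.inr (by rwa [hGneg x hx])
    have hbij : Function.Bijective (fun x => (⟨G x, hGmem x⟩ :
        ((Set.range fun y : Y => (F (y, i) : X)) ∪ Yᶜ : Set X))) := by
      constructor
      · intro x x' h
        have h : G x = G x' := congrArg Subtype.val h
        by_cases hx : x ∈ Y <;> by_cases hx' : x' ∈ Y
        · rw [hGpos ⟨x, hx⟩, hGpos ⟨x', hx'⟩] at h
          exact congrArg Subtype.val (hinj h)
        · rw [hGpos ⟨x, hx⟩, hGneg x' hx'] at h
          exact (hx' (h ▸ (F _).2)).elim
        · rw [hGneg x hx, hGpos ⟨x', hx'⟩] at h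
          exact (hx (h ▸ (F _).2)).elim
        · rwa [hGneg x hx, hGneg x' hx'] at h
      · rintro ⟨w, ⟨y, rfl⟩ | hw⟩
        · exact ⟨y, Subtype.ext (hGpos y)⟩
        · exact ⟨w, Subtype.ext (hGneg w hw)⟩
    refine ⟨fun y => ⟨F (y, i), y, rfl⟩, ⟨fun y y' h => hinj (Subtype.mk.inj h), ?_⟩,
      Continuous.homeoOfEquivCompactToT2 (f := Equiv.ofBijective _ hbij)
        (hcont.subtype_mk hGmem), hGpos, fun z hz => hGneg z hz⟩
    rintro ⟨_, y, rfl⟩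
    exact ⟨y, rfl⟩
end

section
/- Let X be a compact metric space and Y ⊆ X a dense subset such that every point of Y is an isolated point of X and ∂X := X \ Y is nonempty. Let π : Y → ∂X be any function satisfying d(y, π(y)) = d(y, ∂X) for every y ∈ Y. Suppose ∂X = V₁ ⊔ V₂, where V₁ and V₂ are disjoint subsets of ∂X that are both open in the subspace topology of ∂X. Then for i = 1, 2, the closure in X of the set Bᵢ := π⁻¹(Vᵢ) is contained in Bᵢ ∪ Vᵢ. -/
/-! The complementary open sets `V₁`, `V₂` are also closed in `∂X`, and closedness of `V` alone
gives the claim for `π⁻¹(V)` (`closure_preimage_subset`). A limit point of `π⁻¹(V)` lying in `Y` is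
isolated, hence already in `π⁻¹(V)`. If a limit point `x` lies in `∂X` and `y ∈ π⁻¹(V)` is near `x`,
then `d(y, π y) = d(y, ∂X) ≤ d(y, x)`, so `d(x, π y) ≤ 2 d(x, y)`: points of `V` accumulate at `x`,
and `x ∈ V`. -/

theorem closure_preimage_subset {X : Type*} [MetricSpace X] (Y : Set X)
    (hYiso : ∀ y ∈ Y, IsOpen ({y} : Set X))
    (π : Y → (Yᶜ : Set X))
    (hπ : ∀ y : Y, dist (y : X) (π y : X) = Metric.infDist (y : X) (Yᶜ : Set X))
    (V : Set (Yᶜ : Set X)) (hV : IsClosed V) :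
    closure ((↑) '' (π ⁻¹' V) : Set X) ⊆ ((↑) '' (π ⁻¹' V) ∪ (↑) '' V : Set X) := by
  intro x hx
  by_cases hxY : x ∈ Y
  · left
    obtain ⟨z, hz, hzB⟩ := mem_closure_iff.1 hx {x} (hYiso x hxY) rfl
    rwa [Set.mem_singleton_iff.1 hz] at hzB
  · right
    refine ⟨⟨x, hxY⟩, ?_, rfl⟩
    rw [← hV.closure_eq, Metric.mem_closure_iff]
    intro ε hε
    obtain ⟨_, ⟨y, hy, rfl⟩, hd⟩ := Metric.mem_closure_iff.1 hx (ε / 2) (half_pos hε)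
    refine ⟨π y, hy, ?_⟩
    have h1 : dist (y : X) (π y : X) ≤ dist (y : X) x :=
      (hπ y).le.trans (Metric.infDist_le_dist_of_mem hxY)
    have h2 := dist_triangle x (y : X) (π y : X)
    rw [dist_comm (y : X) x] at h1
    rw [Subtype.dist_eq]
    linarith

/-- Let `X` be a compact metric space, `Y ⊆ X` dense and consisting of
isolated points of `X`, with `∂X := X \ Y` nonempty. Let `π : Y → ∂X` satisfy
`d(y, π y) = d(y, ∂X)` for all `y ∈ Y`. If `∂X = V₁ ⊔ V₂` with `V₁, V₂` disjoint open
subsets of `∂X` (subspace topology), then for `i = 1, 2` the closure in `X` of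
`Bᵢ := π⁻¹(Vᵢ)` is contained in `Bᵢ ∪ Vᵢ`. -/
theorem stmt9 {X : Type*} [MetricSpace X] [CompactSpace X] (Y : Set X)
    (hYd : Dense Y) (hYiso : ∀ y ∈ Y, IsOpen ({y} : Set X))
    (hne : (Yᶜ : Set X).Nonempty)
    (π : Y → (Yᶜ : Set X))
    (hπ : ∀ y : Y, dist (y : X) (π y : X) = Metric.infDist (y : X) (Yᶜ : Set X))
    (V₁ V₂ : Set (Yᶜ : Set X)) (hV₁ : IsOpen V₁) (hV₂ : IsOpen V₂)
    (hdisj : Disjoint V₁ V₂) (hunion : V₁ ∪ V₂ = Set.univ) :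
    closure ((↑) '' (π ⁻¹' V₁) : Set X) ⊆ ((↑) '' (π ⁻¹' V₁) ∪ (↑) '' V₁ : Set X) ∧
    closure ((↑) '' (π ⁻¹' V₂) : Set X) ⊆ ((↑) '' (π ⁻¹' V₂) ∪ (↑) '' V₂ : Set X) := by
  have hc : V₁ᶜ = V₂ := (IsCompl.of_eq hdisj.eq_bot hunion).compl_eq
  have h₁ : IsClosed V₁ := by rwa [← isOpen_compl_iff, hc]
  have h₂ : IsClosed V₂ := by rw [← hc]; exact hV₁.isClosed_compl
  exact ⟨closure_preimage_subset Y hYiso π hπ V₁ h₁, closure_preimage_subset Y hYiso π hπ V₂ h₂⟩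
end
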